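/- Let Ω ⊆ ℂ^n be a bounded open set, let μ be a Borel measure on Ω that is absolutely continuous with respect to Lebesgue measure and whose Radon–Nikodym density is bounded below by a positive constant on every compact subset of Ω. Let φ : Ω → ℝ and φ_j : Ω → ℝ (j ≥ 1) be measurable and locally bounded functions such that the sequence (φ_j(w))_j is nonincreasing for every w ∈ Ω and φ_j(w) → φ(w) as j → ∞ for every w ∈ Ω (equivalently, the metrics e^{−φ_j} increase pointwise to e^{−φ}). Fix z ∈ Ω, let K_j be the diagonal Bergman kernel of H²(Ω,μ,φ_j) and K the diagonal Bergman kernel of H²(Ω,μ,φ). Then the sequence (K_j(z))_j is nonincreasing and K_j(z) → K(z) as j → ∞. -/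

import Mathlib

open MeasureTheory Set
open scoped ENNReal ComplexOrder

noncomputable section

/-- The squared weighted `L²` norm `∫_Ω ‖f‖² e^{−φ} dμ`. -/
def bergNormSq {n : ℕ} (Ω : Set (Fin n → ℂ)) (φ : (Fin n → ℂ) → ℝ)
    (μ : Measure (Fin n → ℂ)) (f : (Fin n → ℂ) → ℂ) : ℝ≥0∞ :=
  ∫⁻ z in Ω, ENNReal.ofReal (‖f z‖ ^ 2 * Real.exp (-(φ z))) ∂μ

/-- The diagonal Bergman kernel of the weighted Bergman space `H²(Ω,μ,φ)`. -/
def bergKernel {n : ℕ} (Ω : Set (Fin n → ℂ)) (φ : (Fin n → ℂ) → ℝ)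
    (μ : Measure (Fin n → ℂ)) (z : Fin n → ℂ) : ℝ≥0∞ :=
  ⨆ (f : (Fin n → ℂ) → ℂ) (_ : DifferentiableOn ℂ f Ω)
    (_ : bergNormSq Ω φ μ f ≠ 0) (_ : bergNormSq Ω φ μ f ≠ ⊤),
    ENNReal.ofReal (‖f z‖ ^ 2) / bergNormSq Ω φ μ f

/-- Extended logarithm `ℝ≥0∞ → EReal`, with `elog 0 = ⊥`. -/
def elog (x : ℝ≥0∞) : EReal :=
  if x = 0 then ⊥ else if x = ⊤ then ⊤ else ((Real.log x.toReal : ℝ) : EReal)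

/-- Directional Wirtinger derivative `∂_v f` at `x`. -/
def wder {E : Type*} [NormedAddCommGroup E] [NormedSpace ℂ E]
    (f : E → ℂ) (v x : E) : ℂ :=
  (1 / 2 : ℂ) * (fderiv ℝ f x v - Complex.I * fderiv ℝ f x (Complex.I • v))

/-- Directional conjugate Wirtinger derivative `∂̄_v f` at `x`. -/
def wderBar {E : Type*} [NormedAddCommGroup E] [NormedSpace ℂ E]
    (f : E → ℂ) (v x : E) : ℂ :=
  (1 / 2 : ℂ) * (fderiv ℝ f x v + Complex.I * fderiv ℝ f x (Complex.I • v))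

/-- The complex Hessian (Levi form) of `u` is positive semidefinite on `W`. -/
def LeviPSD {E : Type*} [NormedAddCommGroup E] [NormedSpace ℂ E]
    (W : Set E) (u : E → ℝ) : Prop :=
  ∀ x ∈ W, ∀ v : E, 0 ≤ (wder (fun y => wderBar (fun q => (u q : ℂ)) v y) v x).re

/-- Pseudoconvexity of an open set via a smooth psh exhaustion function. -/
def Pseudoconvex {n : ℕ} (Ω : Set (Fin n → ℂ)) : Prop :=
  IsOpen Ω ∧ ∃ u : (Fin n → ℂ) → ℝ, ContDiffOn ℝ (⊤ : ℕ∞) u Ω ∧ LeviPSD Ω u ∧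
    ∀ c : ℝ, IsCompact {z ∈ Ω | u z ≤ c}

/-- Plurisubharmonicity (with values in `EReal`): upper semicontinuity plus the
sub-mean-value inequality on complex lines, expressed via continuous majorants. -/
def PshOn {E : Type*} [NormedAddCommGroup E] [NormedSpace ℂ E]
    (D : Set E) (u : E → EReal) : Prop :=
  UpperSemicontinuousOn u D ∧
  ∀ a ∈ D, ∀ w : E, ∀ r : ℝ, 0 < r →
    (∀ τ : ℂ, ‖τ‖ ≤ r → a + τ • w ∈ D) →
    ∀ g : ℝ → ℝ, Continuous g →
      (∀ θ : ℝ, u (a + (((r : ℂ) * Complex.exp (θ * Complex.I)) • w)) ≤ ((g θ : ℝ) : EReal)) →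
      u a ≤ (((1 / (2 * Real.pi)) * ∫ θ in (0:ℝ)..(2 * Real.pi), g θ : ℝ) : EReal)

/-- The twisted curvature positivity condition `Ξ_{δ,η}(e^{−φ}) ≥ 0` on `U × Ω`. -/
def XiNonneg {m n : ℕ} (U : Set (Fin m → ℂ)) (Ω : Set (Fin n → ℂ))
    (φ : (Fin m → ℂ) × (Fin n → ℂ) → ℝ) (η : (Fin n → ℂ) → ℝ) (δ : ℝ) : Prop :=
  ∀ p ∈ U ×ˢ Ω, ∀ vt : Fin m → ℂ, ∀ vz : Fin n → ℂ,
    0 ≤ (wder (fun y => wderBar (fun q => (φ q : ℂ))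
            ((vt, 0) : (Fin m → ℂ) × (Fin n → ℂ)) y) ((vt, 0)) p
      + wder (fun y => wderBar (fun q => (φ q : ℂ))
            (((0 : Fin m → ℂ), vz)) y) ((vt, 0)) p
      + wder (fun y => wderBar (fun q => (φ q : ℂ))
            ((vt, 0)) y) (((0 : Fin m → ℂ), vz)) p
      + ((δ / (1 + δ) : ℝ) : ℂ) *
        (wder (fun y => wderBar (fun q => (φ q : ℂ))
            (((0 : Fin m → ℂ), vz)) y) (((0 : Fin m → ℂ), vz)) p
          + 2 * wder (fun y => wderBar (fun w => (η w : ℂ)) vz y) vz p.2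
          - ((1 + δ : ℝ) : ℂ) * (Complex.normSq (wder (fun w => (η w : ℂ)) vz p.2) : ℂ))).re

/-!
`K(z)` is the reciprocal of `m(φ) = inf ‖f‖²_φ` over holomorphic `f` with `f z = 1`, so it suffices
that `m(Φ j)` increases to `m(φ)`. Only `m(φ) ≤ sup m(Φ j)` needs an argument. Choose
near-minimizers `F j` for `m(Φ j)`. For `i ≤ j` the midpoint of `F i` and `F j` is again a
competitor and `‖F j‖_{Φ i} ≤ ‖F j‖_{Φ j}`, so the parallelogram law in the `i`-th norm forces
`‖F i - F j‖_{Φ i} → 0`. All norms dominate the one of `Φ 0`, for which the mean value property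
bounds point evaluations locally uniformly; hence `F j` converges locally uniformly to a holomorphic
competitor for `m(φ)`, whose norm is at most `sup m(Φ j)` by Fatou's lemma.
-/

section MinimizingSequences

open Filter Topology

theorem exists_minimizing_seq_of_midpoint_le {V : Type*} [AddCommGroup V] [Module ℝ V]
    {A : Set V} (hA : ∀ f ∈ A, ∀ g ∈ A, midpoint ℝ f g ∈ A)
    {q : ℕ → V → ℝ≥0∞} (hq : ∀ f ∈ A, Monotone (q · f))
    (hmid : ∀ i, ∀ f ∈ A, ∀ g ∈ A,
      q i (f - g) + 4 * q i (midpoint ℝ f g) ≤ 2 * (q i f + q i g))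
    (hfin : ⨆ i, ⨅ f ∈ A, q i f ≠ ∞) :
    ∃ F : ℕ → V, (∀ j, F j ∈ A) ∧
      Tendsto (fun j ↦ q j (F j)) atTop (𝓝 (⨆ i, ⨅ f ∈ A, q i f)) ∧
      ∃ δ : ℕ → ℝ≥0∞, Tendsto δ atTop (𝓝 0) ∧ ∀ i j, i ≤ j → q i (F i - F j) ≤ δ i := by
  set m := ⨆ i, ⨅ f ∈ A, q i f
  have hinf_mono : Monotone fun i ↦ ⨅ f ∈ A, q i f := fun i j hij ↦
    iInf₂_mono fun f hf ↦ hq f hf hij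
  have hinf_lim : Tendsto (fun i ↦ ⨅ f ∈ A, q i f) atTop (𝓝 m) := tendsto_atTop_iSup hinf_mono
  have hinf_le (i) : ⨅ f ∈ A, q i f ≤ m := le_iSup (fun i ↦ ⨅ f ∈ A, q i f) i
  obtain ⟨u, hu_anti, hu_gt, hu_lim⟩ := exists_seq_strictAnti_tendsto' hfin.lt_top
  have hex (j) : ∃ f ∈ A, q j f < u j := by
    simpa only [iInf_lt_iff, exists_prop] using (hinf_le j).trans_lt (hu_gt j).1
  choose F hFA hFu using hex
  refine ⟨F, hFA, tendsto_of_tendsto_of_tendsto_of_le_of_le hinf_lim hu_lim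
    (fun j ↦ iInf₂_le (F j) (hFA j)) fun j ↦ (hFu j).le,
    fun i ↦ 4 * u i - 4 * ⨅ f ∈ A, q i f, ?_, fun i j hij ↦ ?_⟩
  · have h4 : (4 : ℝ≥0∞) ≠ ∞ := by finiteness
    simpa only [tsub_self] using ENNReal.Tendsto.sub (ENNReal.Tendsto.const_mul hu_lim (.inr h4))
      (ENNReal.Tendsto.const_mul hinf_lim (.inr h4)) (.inl (ENNReal.mul_ne_top h4 hfin))
  · have hqj : q i (F j) ≤ u i :=
      (hq _ (hFA j) hij).trans ((hFu j).le.trans (hu_anti.antitone hij))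
    refine ENNReal.le_sub_of_add_le_right
      (ENNReal.mul_ne_top (by finiteness) (ne_top_of_le_ne_top hfin (hinf_le i))) ?_
    calc q i (F i - F j) + 4 * ⨅ f ∈ A, q i f
        ≤ q i (F i - F j) + 4 * q i (midpoint ℝ (F i) (F j)) := by
          gcongr
          exact iInf₂_le _ (hA _ (hFA i) _ (hFA j))
      _ ≤ 2 * (q i (F i) + q i (F j)) := hmid i _ (hFA i) _ (hFA j)
      _ ≤ 2 * (u i + u i) := by
          gcongr
          exact (hFu i).le
      _ = 4 * u i := by ring

theorem uniformCauchySeqOn_of_edist_le {X Y : Type*} [PseudoEMetricSpace Y]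
    {F : ℕ → X → Y} {s : Set X} {b : ℕ → ℝ≥0∞} (hb : Tendsto b atTop (𝓝 0))
    (h : ∀ i j, i ≤ j → ∀ x ∈ s, edist (F i x) (F j x) ≤ b i) :
    UniformCauchySeqOn F atTop s := by
  intro u hu
  obtain ⟨ε, hε, hεu⟩ := mem_uniformity_edist.1 hu
  obtain ⟨N, hN⟩ := (hb.eventually_lt_const (ENNReal.half_pos hε.ne')).exists
  filter_upwards [(eventually_ge_atTop N).prod_mk (eventually_ge_atTop N)] with p hp x hx
  refine hεu ?_
  calc edist (F p.1 x) (F p.2 x)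
      ≤ edist (F N x) (F p.1 x) + edist (F N x) (F p.2 x) := edist_triangle_left _ _ _
    _ ≤ b N + b N := add_le_add (h N _ hp.1 x hx) (h N _ hp.2 x hx)
    _ < ε / 2 + ε / 2 := ENNReal.add_lt_add hN hN
    _ = ε := ENNReal.add_halves ε

end MinimizingSequences

section LocallyUniformLimits

open Filter Topology Metric

variable {E G ι : Type*} [NormedAddCommGroup E] [NormedSpace ℂ E]
  [NormedAddCommGroup G] [NormedSpace ℂ G] {l : Filter ι} {F : ι → E → G}

theorem uniformCauchySeqOn_fderiv_of_thickening {s : Set E} {δ : ℝ} (hδ : 0 < δ)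
    (hF : ∀ i, DifferentiableOn ℂ (F i) (thickening δ s))
    (h : UniformCauchySeqOn F l (thickening δ s)) :
    UniformCauchySeqOn (fun i ↦ fderiv ℂ (F i)) l s := by
  intro u hu
  obtain ⟨ε, hε, hεu⟩ := Metric.mem_uniformity_dist.1 hu
  filter_upwards [h _ (dist_mem_uniformity (show 0 < ε * δ / 4 by positivity))] with p hp x hx
  have hball : ball x δ ⊆ thickening δ s := ball_subset_thickening hx δ
  have hx' : x ∈ thickening δ s := hball (mem_ball_self hδ)
  have hdiff (i) : DifferentiableAt ℂ (F i) x :=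
    (hF i).differentiableAt (isOpen_thickening.mem_nhds hx')
  have hmaps : MapsTo (F p.1 - F p.2) (ball x δ)
      (closedBall ((F p.1 - F p.2) x) (ε * δ / 2)) := fun y hy ↦ by
    have hy' : ‖F p.1 y - F p.2 y‖ < ε * δ / 4 := by simpa [dist_eq_norm] using hp y (hball hy)
    have hx'' : ‖F p.1 x - F p.2 x‖ < ε * δ / 4 := by simpa [dist_eq_norm] using hp x hx'
    rw [mem_closedBall, dist_eq_norm]
    exact (norm_sub_le _ _).trans (by simp only [Pi.sub_apply]; linarith)
  refine hεu ?_
  rw [dist_eq_norm, ← fderiv_sub (hdiff _) (hdiff _)]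
  calc ‖fderiv ℂ (F p.1 - F p.2) x‖
      ≤ ε * δ / 2 / δ := Complex.norm_fderiv_le_div_of_mapsTo_ball
        (((hF _).sub (hF _)).mono hball) hmaps hδ
    _ < ε := by rw [div_lt_iff₀ hδ]; linarith [mul_pos hε hδ]

theorem exists_differentiableOn_tendsto_of_locally_uniformCauchySeqOn [CompleteSpace G] [l.NeBot]
    {U : Set E} (hU : IsOpen U) (hF : ∀ i, DifferentiableOn ℂ (F i) U)
    (hcauchy : ∀ a ∈ U, ∃ s ∈ 𝓝 a, UniformCauchySeqOn F l s) :
    ∃ f : E → G, DifferentiableOn ℂ f U ∧ ∀ x ∈ U, Tendsto (F · x) l (𝓝 (f x)) := by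
  have hlim : ∀ x ∈ U, ∃ y, Tendsto (F · x) l (𝓝 y) := fun x hx ↦ by
    obtain ⟨s, hs, hFs⟩ := hcauchy x hx
    exact CompleteSpace.complete (hFs.cauchy_map (mem_of_mem_nhds hs))
  choose! f hf using hlim
  refine ⟨f, fun a ha ↦ ?_, hf⟩
  obtain ⟨s, hs, hFs⟩ := hcauchy a ha
  obtain ⟨ε, hε, hball⟩ := Metric.mem_nhds_iff.1 (inter_mem hs (hU.mem_nhds ha))
  have hthick : thickening (ε / 2) (ball a (ε / 2)) ⊆ s ∩ U :=
    (thickening_ball a (ε / 2) (ε / 2)).trans ((ball_subset_ball (by linarith)).trans hball)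
  have hfderiv : UniformCauchySeqOn (fun i ↦ fderiv ℂ (F i)) l (ball a (ε / 2)) :=
    uniformCauchySeqOn_fderiv_of_thickening (half_pos hε)
      (fun i ↦ (hF i).mono fun x hx ↦ (hthick hx).2) (hFs.mono fun x hx ↦ (hthick hx).1)
  have hlim' : ∀ x ∈ ball a (ε / 2), ∃ L, Tendsto (fun i ↦ fderiv ℂ (F i) x) l (𝓝 L) :=
    fun x hx ↦ CompleteSpace.complete (hfderiv.cauchy_map hx)
  choose! f' hf' using hlim'
  have hsub : ball a (ε / 2) ⊆ U := fun x hx ↦ (hball (ball_subset_ball (by linarith) hx)).2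
  exact (hasFDerivAt_of_tendstoUniformlyOn isOpen_ball
    (hfderiv.tendstoUniformlyOn_of_tendsto hf')
    (fun i x hx ↦ ((hF i).differentiableAt (hU.mem_nhds (hsub hx))).hasFDerivAt)
    (fun x hx ↦ hf x (hsub hx))
    (mem_ball_self (half_pos hε))).differentiableAt.differentiableWithinAt

end LocallyUniformLimits

section MeanValue

open Metric

variable {E : Type*} [NormedAddCommGroup E] [NormedSpace ℂ E] [MeasurableSpace E] [BorelSpace E]
  {F : Type*} [NormedAddCommGroup F] [NormedSpace ℂ F]

theorem measurePreserving_smul_of_norm_eq_one [FiniteDimensional ℂ E] (μ : Measure E)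
    [μ.IsAddHaarMeasure] {u : ℂ} (hu : ‖u‖ = 1) : MeasurePreserving (u • · : E → E) μ μ := by
  let L : E →ₗ[ℂ] E := u • LinearMap.id
  have hdet : LinearMap.det (L.restrictScalars ℝ) = 1 := by
    rw [LinearMap.det_restrictScalars]
    simp [L, Algebra.norm_complex_eq, Complex.normSq_eq_norm_sq, hu]
  have hmap : Measure.map L μ = μ := by
    simpa [hdet] using Measure.map_linearMap_addHaar_eq_smul_addHaar μ (f := L.restrictScalars ℝ)
      (by simp [hdet])
  exact ⟨measurable_const_smul u, hmap⟩

theorem integral_circleAverage_smul [SecondCountableTopology E] [CompleteSpace F]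
    {ν : Measure E} [SFinite ν]
    (hν : ∀ u : ℂ, ‖u‖ = 1 → MeasurePreserving (u • · : E → E) ν ν)
    {g : E → F} (hg : Integrable g ν) :
    ∫ w, Real.circleAverage (fun τ ↦ g (τ • w)) 0 1 ∂ν = ∫ w, g w ∂ν := by
  have hrot (θ : ℝ) : MeasurePreserving (circleMap 0 1 θ • · : E → E) ν ν := hν _ (by simp)
  have : IsFiniteMeasure (volume.restrict (uIoc 0 (2 * Real.pi))) :=
    isFiniteMeasure_restrict.2 (by rw [Real.volume_uIoc]; exact ENNReal.ofReal_ne_top)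
  have hskew : MeasurePreserving (fun p : ℝ × E ↦ (p.1, circleMap 0 1 p.1 • p.2))
      ((volume.restrict (uIoc 0 (2 * Real.pi))).prod ν)
      ((volume.restrict (uIoc 0 (2 * Real.pi))).prod ν) :=
    (MeasurePreserving.id _).skew_product
      (((continuous_circleMap 0 1).comp continuous_fst).smul continuous_snd).measurable
      (ae_of_all _ fun θ ↦ (hrot θ).map_eq)
  have hint : Integrable (Function.uncurry fun θ w ↦ g (circleMap 0 1 θ • w))
      ((volume.restrict (uIoc 0 (2 * Real.pi))).prod ν) :=
    hskew.integrable_comp_of_integrable (hg.comp_snd _)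
  have hconst (θ : ℝ) : ∫ w, g (circleMap 0 1 θ • w) ∂ν = ∫ w, g w ∂ν :=
    (hrot θ).integral_comp
      (measurableEmbedding_const_smul₀ (circleMap_ne_center one_ne_zero)) g
  calc ∫ w, Real.circleAverage (fun τ ↦ g (τ • w)) 0 1 ∂ν
      = (2 * Real.pi)⁻¹ • ∫ θ in (0)..2 * Real.pi, ∫ w, g (circleMap 0 1 θ • w) ∂ν := by
        simp only [Real.circleAverage_def]
        rw [integral_smul, ← intervalIntegral_integral_swap hint]
    _ = ∫ w, g w ∂ν := by
        simp only [hconst, intervalIntegral.integral_const, sub_zero]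
        rw [inv_smul_smul₀ (by positivity)]

theorem setIntegral_ball_of_differentiableOn [FiniteDimensional ℂ E] [CompleteSpace F]
    (μ : Measure E) [μ.IsAddHaarMeasure] {f : E → F} {a : E} {r : ℝ}
    (hf : DifferentiableOn ℂ f (ball a r)) (hfi : IntegrableOn f (ball a r) μ) :
    ∫ w in ball a r, f w ∂μ = μ.real (ball a r) • f a := by
  have hpre : (a + ·) ⁻¹' ball a r = ball 0 r := by simp
  have htrans : MeasurePreserving (a + ·) (μ.restrict (ball 0 r)) (μ.restrict (ball a r)) :=
    hpre ▸ (measurePreserving_add_left μ a).restrict_preimage measurableSet_ball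
  have hrot (u : ℂ) (hu : ‖u‖ = 1) :
      MeasurePreserving (u • · : E → E) (μ.restrict (ball 0 r)) (μ.restrict (ball 0 r)) := by
    have hpre : (u • · : E → E) ⁻¹' ball 0 r = ball 0 r := by ext; simp [norm_smul, hu]
    simpa only [hpre] using (measurePreserving_smul_of_norm_eq_one μ hu).restrict_preimage
      (measurableSet_ball (x := (0 : E)) (ε := r))
  have hcircle : ∀ w ∈ ball (0 : E) r,
      Real.circleAverage (fun τ : ℂ ↦ f (a + τ • w)) 0 1 = f a := fun w hw ↦ by
    have hmaps : MapsTo (fun τ : ℂ ↦ a + τ • w) (closedBall 0 1) (ball a r) := fun τ hτ ↦ by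
      have hτw : ‖τ‖ * ‖w‖ ≤ ‖w‖ :=
        mul_le_of_le_one_left (norm_nonneg w) (mem_closedBall_zero_iff.1 hτ)
      simpa [norm_smul] using hτw.trans_lt (mem_ball_zero_iff.1 hw)
    have hdiff : DifferentiableOn ℂ (fun τ : ℂ ↦ f (a + τ • w)) (closure (ball 0 |1|)) := by
      rw [abs_one, closure_ball _ one_ne_zero]
      exact hf.comp (by fun_prop) hmaps
    simpa using hdiff.diffContOnCl.circleAverage
  calc ∫ w in ball a r, f w ∂μ
      = ∫ w in ball 0 r, f (a + w) ∂μ :=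
        (htrans.integral_comp (MeasurableEquiv.addLeft a).measurableEmbedding f).symm
    _ = ∫ w in ball 0 r, Real.circleAverage (fun τ : ℂ ↦ f (a + τ • w)) 0 1 ∂μ :=
        (integral_circleAverage_smul hrot (htrans.integrable_comp_of_integrable hfi)).symm
    _ = ∫ _ in ball 0 r, f a ∂μ := setIntegral_congr_fun measurableSet_ball hcircle
    _ = μ.real (ball a r) • f a := by
        rw [setIntegral_const, measureReal_def, measureReal_def, Measure.addHaar_ball_center μ a]

theorem measure_ball_mul_enorm_le_setLIntegral [FiniteDimensional ℂ E] [CompleteSpace F]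
    (μ : Measure E) [μ.IsAddHaarMeasure] {f : E → F} {a : E} {r : ℝ}
    (hf : DifferentiableOn ℂ f (ball a r)) :
    μ (ball a r) * ‖f a‖ₑ ≤ ∫⁻ w in ball a r, ‖f w‖ₑ ∂μ := by
  by_cases hfin : ∫⁻ w in ball a r, ‖f w‖ₑ ∂μ = ∞
  · simp [hfin]
  have hfi : IntegrableOn f (ball a r) μ :=
    ⟨hf.continuousOn.aestronglyMeasurable measurableSet_ball, lt_top_iff_ne_top.2 hfin⟩
  calc μ (ball a r) * ‖f a‖ₑ
      = ‖∫ w in ball a r, f w ∂μ‖ₑ := by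
        rw [setIntegral_ball_of_differentiableOn μ hf hfi, enorm_smul,
          Real.enorm_eq_ofReal measureReal_nonneg, ofReal_measureReal]
    _ ≤ ∫⁻ w in ball a r, ‖f w‖ₑ ∂μ := enorm_integral_le_lintegral_enorm f

theorem measure_ball_mul_enorm_pow_le_setLIntegral [FiniteDimensional ℂ E]
    (μ : Measure E) [μ.IsAddHaarMeasure] {f : E → ℂ} {s : Set E} {x : E} {r : ℝ}
    (hf : DifferentiableOn ℂ f s) (hs : ball x r ⊆ s) (k : ℕ) :
    μ (ball 0 r) * ‖f x‖ₑ ^ k ≤ ∫⁻ w in s, ‖f w‖ₑ ^ k ∂μ :=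
  calc μ (ball 0 r) * ‖f x‖ₑ ^ k
      = μ (ball x r) * ‖f x ^ k‖ₑ := by rw [enorm_pow, Measure.addHaar_ball_center μ x]
    _ ≤ ∫⁻ w in ball x r, ‖f w ^ k‖ₑ ∂μ :=
        measure_ball_mul_enorm_le_setLIntegral μ ((hf.mono hs).pow k)
    _ ≤ ∫⁻ w in s, ‖f w‖ₑ ^ k ∂μ := by simpa only [enorm_pow] using lintegral_mono_set hs

end MeanValue

theorem smul_restrict_le_restrict_of_le_rnDeriv {X : Type*} [MeasurableSpace X] {μ ν : Measure X}
    {c : ℝ≥0∞} {K : Set X} (hK : MeasurableSet K) (h : ∀ᵐ x ∂ν, x ∈ K → c ≤ μ.rnDeriv ν x) :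
    c • ν.restrict K ≤ μ.restrict K :=
  calc c • ν.restrict K
      = (ν.restrict K).withDensity fun _ ↦ c := (withDensity_const c).symm
    _ ≤ (ν.restrict K).withDensity (μ.rnDeriv ν) :=
        withDensity_mono ((ae_restrict_iff' hK).2 h)
    _ = (ν.withDensity (μ.rnDeriv ν)).restrict K := (restrict_withDensity hK _).symm
    _ ≤ μ.restrict K := Measure.restrict_mono subset_rfl (Measure.withDensity_rnDeriv_le μ ν)

theorem enorm_sub_sq_add_four_mul_enorm_midpoint_sq {H : Type*} [SeminormedAddCommGroup H]
    [InnerProductSpace ℝ H] (x y : H) :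
    ‖x - y‖ₑ ^ 2 + 4 * ‖midpoint ℝ x y‖ₑ ^ 2 = 2 * (‖x‖ₑ ^ 2 + ‖y‖ₑ ^ 2) := by
  have hmid : 2 * ‖midpoint ℝ x y‖ = ‖x + y‖ := by
    rw [midpoint_eq_smul_add, norm_smul, invOf_eq_inv, Real.norm_of_nonneg (by norm_num)]
    ring
  have hreal : ‖x - y‖₊ ^ 2 + 4 * ‖midpoint ℝ x y‖₊ ^ 2 = 2 * (‖x‖₊ ^ 2 + ‖y‖₊ ^ 2) := by
    apply NNReal.eq
    push_cast
    linear_combination parallelogram_law_with_norm ℝ x y +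
      (2 * ‖midpoint ℝ x y‖ + ‖x + y‖) * hmid
  simp only [enorm_eq_nnnorm]
  exact_mod_cast hreal

section WeightedNorm

open Filter Topology

variable {n : ℕ} {Ω : Set (Fin n → ℂ)} {φ ψ : (Fin n → ℂ) → ℝ} {μ : Measure (Fin n → ℂ)}
  {f g : (Fin n → ℂ) → ℂ}

theorem bergNormSq_eq_lintegral_enorm :
    bergNormSq Ω φ μ f = ∫⁻ w in Ω, ‖f w‖ₑ ^ 2 * ENNReal.ofReal (Real.exp (-φ w)) ∂μ := by
  simp only [bergNormSq, ENNReal.ofReal_mul (sq_nonneg ‖_‖), ENNReal.ofReal_pow (norm_nonneg _),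
    ofReal_norm]

theorem bergNormSq_const_smul (c : ℂ) :
    bergNormSq Ω φ μ (c • f) = ‖c‖ₑ ^ 2 * bergNormSq Ω φ μ f := by
  simp only [bergNormSq_eq_lintegral_enorm, Pi.smul_apply, enorm_smul, mul_pow, mul_assoc]
  exact lintegral_const_mul' _ _ (by finiteness)

theorem bergNormSq_anti (h : φ ≤ᵐ[μ.restrict Ω] ψ) : bergNormSq Ω ψ μ f ≤ bergNormSq Ω φ μ f :=
  lintegral_mono_ae (h.mono fun _ hw ↦ by gcongr)

theorem bergNormSq_sub_add_four_mul_midpoint (hφ : AEMeasurable φ (μ.restrict Ω))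
    (hf : AEMeasurable f (μ.restrict Ω)) (hg : AEMeasurable g (μ.restrict Ω)) :
    bergNormSq Ω φ μ (f - g) + 4 * bergNormSq Ω φ μ (midpoint ℝ f g) =
      2 * (bergNormSq Ω φ μ f + bergNormSq Ω φ μ g) := by
  have hmeas {h : (Fin n → ℂ) → ℂ} (hh : AEMeasurable h (μ.restrict Ω)) :
      AEMeasurable (fun w ↦ ‖h w‖ₑ ^ 2 * ENNReal.ofReal (Real.exp (-φ w))) (μ.restrict Ω) :=
    (hh.enorm.pow_const 2).mul hφ.neg.exp.ennreal_ofReal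
  simp only [bergNormSq_eq_lintegral_enorm, pi_midpoint_apply]
  rw [← lintegral_const_mul' _ _ (by finiteness),
    ← lintegral_add_left' (hmeas (hf.sub hg)), ← lintegral_add_left' (hmeas hf),
    ← lintegral_const_mul' _ _ (by finiteness)]
  refine lintegral_congr fun w ↦ ?_
  rw [Pi.sub_apply, ← mul_assoc, ← add_mul, ← add_mul, ← mul_assoc,
    enorm_sub_sq_add_four_mul_enorm_midpoint_sq]

theorem ofReal_exp_mul_setLIntegral_le_bergNormSq {K : Set (Fin n → ℂ)} {M : ℝ}
    (hK : MeasurableSet K) (hKΩ : K ⊆ Ω) (hM : ∀ w ∈ K, φ w ≤ M) :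
    ENNReal.ofReal (Real.exp (-M)) * ∫⁻ w in K, ‖f w‖ₑ ^ 2 ∂μ ≤ bergNormSq Ω φ μ f :=
  calc ENNReal.ofReal (Real.exp (-M)) * ∫⁻ w in K, ‖f w‖ₑ ^ 2 ∂μ
      = ∫⁻ w in K, ‖f w‖ₑ ^ 2 * ENNReal.ofReal (Real.exp (-M)) ∂μ := by
        rw [lintegral_mul_const' _ _ ENNReal.ofReal_ne_top, mul_comm]
    _ ≤ ∫⁻ w in K, ‖f w‖ₑ ^ 2 * ENNReal.ofReal (Real.exp (-φ w)) ∂μ :=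
        setLIntegral_mono' hK fun w hw ↦ by gcongr; exact hM w hw
    _ ≤ ∫⁻ w in Ω, ‖f w‖ₑ ^ 2 * ENNReal.ofReal (Real.exp (-φ w)) ∂μ := lintegral_mono_set hKΩ
    _ = bergNormSq Ω φ μ f := bergNormSq_eq_lintegral_enorm.symm

theorem bergNormSq_le_liminf {Φ : ℕ → (Fin n → ℂ) → ℝ} {F : ℕ → (Fin n → ℂ) → ℂ}
    (hΦm : ∀ j, AEMeasurable (Φ j) (μ.restrict Ω)) (hFm : ∀ j, AEMeasurable (F j) (μ.restrict Ω))
    (hΦ : ∀ᵐ w ∂μ.restrict Ω, Tendsto (Φ · w) atTop (𝓝 (φ w)))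
    (hF : ∀ᵐ w ∂μ.restrict Ω, Tendsto (F · w) atTop (𝓝 (f w))) :
    bergNormSq Ω φ μ f ≤ liminf (fun j ↦ bergNormSq Ω (Φ j) μ (F j)) atTop := by
  have hlim : ∀ᵐ w ∂μ.restrict Ω, ENNReal.ofReal (‖f w‖ ^ 2 * Real.exp (-φ w)) =
      liminf (fun j ↦ ENNReal.ofReal (‖F j w‖ ^ 2 * Real.exp (-Φ j w))) atTop := by
    filter_upwards [hΦ, hF] with w hΦw hFw
    exact (ENNReal.tendsto_ofReal ((hFw.norm.pow 2).mul hΦw.neg.rexp)).liminf_eq.symm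
  calc bergNormSq Ω φ μ f
      = ∫⁻ w in Ω, liminf (fun j ↦ ENNReal.ofReal (‖F j w‖ ^ 2 * Real.exp (-Φ j w))) atTop ∂μ :=
        lintegral_congr_ae hlim
    _ ≤ liminf (fun j ↦ bergNormSq Ω (Φ j) μ (F j)) atTop :=
        lintegral_liminf_le' fun j ↦
          (((hFm j).norm.pow_const 2).mul (hΦm j).neg.exp).ennreal_ofReal

end WeightedNorm

section Admissible

open Filter Topology Metric

variable {n : ℕ} {Ω : Set (Fin n → ℂ)} {φ ψ : (Fin n → ℂ) → ℝ} {μ : Measure (Fin n → ℂ)}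

/-- The weight `e^{−φ} dμ` is admissible on `Ω` (in the sense of Pasternak-Winiarski): point
evaluations of holomorphic functions are bounded for the weighted norm, locally uniformly in the
point. This is what makes weighted `L²` convergence imply locally uniform convergence. -/
def IsAdmissible (Ω : Set (Fin n → ℂ)) (φ : (Fin n → ℂ) → ℝ) (μ : Measure (Fin n → ℂ)) : Prop :=
  ∀ a ∈ Ω, ∃ C : ℝ≥0∞, C ≠ ∞ ∧ ∀ᶠ x in 𝓝 a, ∀ f : (Fin n → ℂ) → ℂ,
    DifferentiableOn ℂ f Ω → ‖f x‖ₑ ^ 2 ≤ C * bergNormSq Ω φ μ f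

theorem IsAdmissible.anti (hψ : IsAdmissible Ω ψ μ) (h : φ ≤ᵐ[μ.restrict Ω] ψ) :
    IsAdmissible Ω φ μ := fun a ha ↦ by
  obtain ⟨C, hC, hle⟩ := hψ a ha
  refine ⟨C, hC, hle.mono fun x hx f hf ↦ (hx f hf).trans ?_⟩
  gcongr
  exact bergNormSq_anti h

theorem isAdmissible_of_le_rnDeriv (hΩ : IsOpen Ω)
    (hμ : ∀ K ⊆ Ω, IsCompact K →
      ∃ c : ℝ, 0 < c ∧ ∀ᵐ w, w ∈ K → ENNReal.ofReal c ≤ μ.rnDeriv volume w)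
    (hφ : ∀ K ⊆ Ω, IsCompact K → ∃ M : ℝ, ∀ w ∈ K, φ w ≤ M) :
    IsAdmissible Ω φ μ := fun a ha ↦ by
  obtain ⟨ε, hε, hεΩ⟩ := nhds_basis_closedBall.mem_iff.1 (hΩ.mem_nhds ha)
  obtain ⟨c, hc, hcK⟩ := hμ _ hεΩ (isCompact_closedBall a ε)
  obtain ⟨M, hM⟩ := hφ _ hεΩ (isCompact_closedBall a ε)
  set K := closedBall a ε
  set e := ENNReal.ofReal (Real.exp (-M))
  set d := ENNReal.ofReal c
  set v := volume (ball (0 : Fin n → ℂ) (ε / 2))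
  have hpos : e * (d * v) ≠ 0 := mul_ne_zero (ENNReal.ofReal_pos.2 (Real.exp_pos _)).ne'
    (mul_ne_zero (ENNReal.ofReal_pos.2 hc).ne' (measure_ball_pos _ _ (half_pos hε)).ne')
  refine ⟨(e * (d * v))⁻¹, ENNReal.inv_ne_top.2 hpos, ?_⟩
  filter_upwards [ball_mem_nhds a (half_pos hε)] with x hx f hf
  have hxK : ball x (ε / 2) ⊆ K :=
    (ball_subset_ball' (by linarith [mem_ball.1 hx])).trans ball_subset_closedBall
  have hdens : d * ∫⁻ w in K, ‖f w‖ₑ ^ 2 ≤ ∫⁻ w in K, ‖f w‖ₑ ^ 2 ∂μ := by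
    rw [← smul_eq_mul, ← lintegral_smul_measure]
    exact lintegral_mono'
      (smul_restrict_le_restrict_of_le_rnDeriv measurableSet_closedBall hcK) le_rfl
  rw [← ENNReal.mul_le_iff_le_inv hpos (by finiteness)]
  calc e * (d * v) * ‖f x‖ₑ ^ 2 = e * (d * (v * ‖f x‖ₑ ^ 2)) := by ring
    _ ≤ e * (d * ∫⁻ w in K, ‖f w‖ₑ ^ 2) := by
        gcongr
        exact measure_ball_mul_enorm_pow_le_setLIntegral volume (hf.mono hεΩ) hxK 2
    _ ≤ e * ∫⁻ w in K, ‖f w‖ₑ ^ 2 ∂μ := by gcongr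
    _ ≤ bergNormSq Ω φ μ f :=
        ofReal_exp_mul_setLIntegral_le_bergNormSq measurableSet_closedBall hεΩ hM

theorem IsAdmissible.exists_tendsto (hφ : IsAdmissible Ω φ μ) (hΩ : IsOpen Ω)
    {F : ℕ → (Fin n → ℂ) → ℂ} (hF : ∀ j, DifferentiableOn ℂ (F j) Ω) {δ : ℕ → ℝ≥0∞}
    (hδ : Tendsto δ atTop (𝓝 0)) (h : ∀ i j, i ≤ j → bergNormSq Ω φ μ (F i - F j) ≤ δ i) :
    ∃ f : (Fin n → ℂ) → ℂ, DifferentiableOn ℂ f Ω ∧ ∀ x ∈ Ω, Tendsto (F · x) atTop (𝓝 (f x)) := by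
  refine exists_differentiableOn_tendsto_of_locally_uniformCauchySeqOn hΩ hF fun a ha ↦ ?_
  obtain ⟨C, hC, hle⟩ := hφ a ha
  have hb : Tendsto (fun i ↦ (C * δ i) ^ (2⁻¹ : ℝ)) atTop (𝓝 0) := by
    simpa using (ENNReal.Tendsto.const_mul hδ (.inr hC)).ennrpow_const 2⁻¹
  refine ⟨_, hle, uniformCauchySeqOn_of_edist_le hb fun i j hij x hx ↦ ?_⟩
  rw [edist_eq_enorm_sub, ENNReal.le_rpow_inv_iff two_pos, ENNReal.rpow_two]
  calc ‖F i x - F j x‖ₑ ^ 2 ≤ C * bergNormSq Ω φ μ (F i - F j) := hx _ ((hF i).sub (hF j))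
    _ ≤ C * δ i := by gcongr; exact h i j hij

end Admissible

section ExtremalProblem

open Filter Topology

variable {n : ℕ} {Ω : Set (Fin n → ℂ)} {φ ψ : (Fin n → ℂ) → ℝ} {μ : Measure (Fin n → ℂ)}
  {z : Fin n → ℂ}

/-- The competitors in Bergman's extremal problem at `z`: holomorphic functions on `Ω` with value
`1` at `z`. -/
def normalizedHolo (Ω : Set (Fin n → ℂ)) (z : Fin n → ℂ) : Set ((Fin n → ℂ) → ℂ) :=
  {f | DifferentiableOn ℂ f Ω ∧ f z = 1}

/-- The value of Bergman's extremal problem at `z`: the least squared weighted norm of a holomorphic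
function with value `1` at `z`, equal to `∞` when no such function has finite norm. -/
def bergMinNormSq (Ω : Set (Fin n → ℂ)) (φ : (Fin n → ℂ) → ℝ) (μ : Measure (Fin n → ℂ))
    (z : Fin n → ℂ) : ℝ≥0∞ :=
  ⨅ f ∈ normalizedHolo Ω z, bergNormSq Ω φ μ f

theorem midpoint_mem_normalizedHolo {f g : (Fin n → ℂ) → ℂ} (hf : f ∈ normalizedHolo Ω z)
    (hg : g ∈ normalizedHolo Ω z) : midpoint ℝ f g ∈ normalizedHolo Ω z := by
  refine ⟨?_, by simp [pi_midpoint_apply, hf.2, hg.2]⟩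
  rw [midpoint_eq_smul_add]
  exact (hf.1.add hg.1).const_smul _

theorem bergMinNormSq_anti (h : φ ≤ᵐ[μ.restrict Ω] ψ) :
    bergMinNormSq Ω ψ μ z ≤ bergMinNormSq Ω φ μ z :=
  iInf₂_mono fun _ _ ↦ bergNormSq_anti h

theorem bergMinNormSq_mul_enorm_sq_le {f : (Fin n → ℂ) → ℂ} (hf : DifferentiableOn ℂ f Ω) :
    bergMinNormSq Ω φ μ z * ‖f z‖ₑ ^ 2 ≤ bergNormSq Ω φ μ f := by
  rcases eq_or_ne (f z) 0 with h0 | h0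
  · simp [h0]
  have hmem : (f z)⁻¹ • f ∈ normalizedHolo Ω z := ⟨hf.const_smul _, by simp [h0]⟩
  calc bergMinNormSq Ω φ μ z * ‖f z‖ₑ ^ 2
      ≤ bergNormSq Ω φ μ ((f z)⁻¹ • f) * ‖f z‖ₑ ^ 2 := by
        gcongr
        exact iInf₂_le _ hmem
    _ = bergNormSq Ω φ μ (f z • (f z)⁻¹ • f) := by rw [bergNormSq_const_smul (f z), mul_comm]
    _ = bergNormSq Ω φ μ f := by rw [smul_inv_smul₀ h0]

theorem IsAdmissible.bergKernel_eq_inv_bergMinNormSq (hφ : IsAdmissible Ω φ μ) (hz : z ∈ Ω) :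
    bergKernel Ω φ μ z = (bergMinNormSq Ω φ μ z)⁻¹ := by
  apply le_antisymm
  · refine iSup₂_le fun f hf ↦ iSup₂_le fun hf0 hftop ↦ ?_
    rw [ENNReal.ofReal_pow (norm_nonneg _), ofReal_norm, ENNReal.div_le_iff hf0 hftop, mul_comm,
      ← div_eq_mul_inv, ENNReal.le_div_iff_mul_le (.inr hf0) (.inr hftop), mul_comm]
    exact bergMinNormSq_mul_enorm_sq_le hf
  · simp only [bergMinNormSq, ENNReal.inv_iInf]
    refine iSup₂_le fun f hf ↦ ?_
    have hf0 : bergNormSq Ω φ μ f ≠ 0 := fun h0 ↦ by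
      obtain ⟨C, -, hC⟩ := hφ z hz
      simpa [hf.2, h0] using hC.self_of_nhds f hf.1
    rcases eq_or_ne (bergNormSq Ω φ μ f) ∞ with htop | htop
    · simp [htop]
    · refine le_iSup₂_of_le f hf.1 (le_iSup₂_of_le hf0 htop ?_)
      simp [hf.2]

theorem bergMinNormSq_eq_iSup_of_antitone (hΩ : IsOpen Ω) {Φ : ℕ → (Fin n → ℂ) → ℝ}
    (hΦm : ∀ j, AEMeasurable (Φ j) (μ.restrict Ω)) (hΦ₀ : IsAdmissible Ω (Φ 0) μ)
    (hanti : ∀ᵐ w ∂μ.restrict Ω, Antitone (Φ · w))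
    (hlim : ∀ᵐ w ∂μ.restrict Ω, Tendsto (Φ · w) atTop (𝓝 (φ w))) (hz : z ∈ Ω) :
    bergMinNormSq Ω φ μ z = ⨆ j, bergMinNormSq Ω (Φ j) μ z := by
  have hle {i j} (hij : i ≤ j) : Φ j ≤ᵐ[μ.restrict Ω] Φ i := hanti.mono fun _ h ↦ h hij
  have hφle (j) : φ ≤ᵐ[μ.restrict Ω] Φ j := by
    filter_upwards [hanti, hlim] with w using fun h h' ↦ h.le_of_tendsto h' j
  refine le_antisymm ?_ (iSup_le fun j ↦ bergMinNormSq_anti (hφle j))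
  by_cases hfin : ⨆ j, bergMinNormSq Ω (Φ j) μ z = ∞
  · exact hfin ▸ le_top
  have hmeas {f : (Fin n → ℂ) → ℂ} (hf : DifferentiableOn ℂ f Ω) : AEMeasurable f (μ.restrict Ω) :=
    hf.continuousOn.aemeasurable hΩ.measurableSet
  obtain ⟨F, hF, hFlim, δ, hδ, hFδ⟩ := exists_minimizing_seq_of_midpoint_le
    (q := fun i ↦ bergNormSq Ω (Φ i) μ) (fun f hf g hg ↦ midpoint_mem_normalizedHolo hf hg)
    (fun f _ i j hij ↦ bergNormSq_anti (hle hij))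
    (fun i f hf g hg ↦
      (bergNormSq_sub_add_four_mul_midpoint (hΦm i) (hmeas hf.1) (hmeas hg.1)).le) hfin
  obtain ⟨f, hf, hFf⟩ := hΦ₀.exists_tendsto hΩ (fun j ↦ (hF j).1) hδ fun i j hij ↦
    (bergNormSq_anti (hle (Nat.zero_le i))).trans (hFδ i j hij)
  have hfz : f z = 1 := tendsto_nhds_unique (hFf z hz) (by simp [(hF _).2])
  calc bergMinNormSq Ω φ μ z
      ≤ bergNormSq Ω φ μ f := iInf₂_le f ⟨hf, hfz⟩
    _ ≤ liminf (fun j ↦ bergNormSq Ω (Φ j) μ (F j)) atTop :=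
        bergNormSq_le_liminf hΦm (fun j ↦ hmeas (hF j).1) hlim
          (ae_restrict_of_forall_mem hΩ.measurableSet hFf)
    _ = ⨆ j, bergMinNormSq Ω (Φ j) μ z := hFlim.liminf_eq

theorem bergKernel_increasing_metrics_general (hΩ : IsOpen Ω) {Φ : ℕ → (Fin n → ℂ) → ℝ}
    (hΦm : ∀ j, AEMeasurable (Φ j) (μ.restrict Ω)) (hΦ₀ : IsAdmissible Ω (Φ 0) μ)
    (hanti : ∀ᵐ w ∂μ.restrict Ω, Antitone (Φ · w))
    (hlim : ∀ᵐ w ∂μ.restrict Ω, Tendsto (Φ · w) atTop (𝓝 (φ w))) (hz : z ∈ Ω) :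
    Antitone (fun j ↦ bergKernel Ω (Φ j) μ z) ∧
      Tendsto (fun j ↦ bergKernel Ω (Φ j) μ z) atTop (𝓝 (bergKernel Ω φ μ z)) := by
  have hle {i j} (hij : i ≤ j) : Φ j ≤ᵐ[μ.restrict Ω] Φ i := hanti.mono fun _ h ↦ h hij
  have hφle : φ ≤ᵐ[μ.restrict Ω] Φ 0 := by
    filter_upwards [hanti, hlim] with w using fun h h' ↦ h.le_of_tendsto h' 0
  have hmono : Monotone fun j ↦ bergMinNormSq Ω (Φ j) μ z := fun i j hij ↦
    bergMinNormSq_anti (hle hij)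
  simp only [fun j ↦ (hΦ₀.anti (hle (Nat.zero_le j))).bergKernel_eq_inv_bergMinNormSq hz,
    (hΦ₀.anti hφle).bergKernel_eq_inv_bergMinNormSq hz,
    bergMinNormSq_eq_iSup_of_antitone hΩ hΦm hΦ₀ hanti hlim hz]
  exact ⟨fun i j hij ↦ ENNReal.inv_le_inv.2 (hmono hij), (tendsto_atTop_iSup hmono).inv⟩

end ExtremalProblem

/-- **Ramadanov-type theorem for metrics increasing to a limit metric**: if the weights
`Φ j` decrease pointwise to `φ` (so the metrics `e^{−Φ j}` increase to `e^{−φ}`), the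
Bergman kernels decrease to the Bergman kernel of the limit. -/
theorem bergKernel_increasing_metrics {n : ℕ}
    (Ω : Set (Fin n → ℂ)) (hΩ : IsOpen Ω) (hb : Bornology.IsBounded Ω)
    (μ : Measure (Fin n → ℂ)) (hac : μ ≪ volume)
    (hlb : ∀ K : Set (Fin n → ℂ), K ⊆ Ω → IsCompact K →
      ∃ c : ℝ, 0 < c ∧ ∀ᵐ z ∂volume, z ∈ K → ENNReal.ofReal c ≤ μ.rnDeriv volume z)
    (φ : (Fin n → ℂ) → ℝ) (hφm : Measurable φ)
    (hφb : ∀ K : Set (Fin n → ℂ), K ⊆ Ω → IsCompact K → ∃ M : ℝ, ∀ z ∈ K, |φ z| ≤ M)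
    (Φ : ℕ → (Fin n → ℂ) → ℝ) (hΦm : ∀ j, Measurable (Φ j))
    (hΦb : ∀ j, ∀ K : Set (Fin n → ℂ), K ⊆ Ω → IsCompact K → ∃ M : ℝ, ∀ z ∈ K, |Φ j z| ≤ M)
    (hmono : ∀ w ∈ Ω, Antitone (fun j => Φ j w))
    (hlim : ∀ w ∈ Ω, Filter.Tendsto (fun j => Φ j w) Filter.atTop (nhds (φ w)))
    (z : Fin n → ℂ) (hz : z ∈ Ω) :
    Antitone (fun j => bergKernel Ω (Φ j) μ z) ∧
    Filter.Tendsto (fun j => bergKernel Ω (Φ j) μ z) Filter.atTop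
      (nhds (bergKernel Ω φ μ z)) := by
  exact bergKernel_increasing_metrics_general hΩ (fun j ↦ (hΦm j).aemeasurable)
    (isAdmissible_of_le_rnDeriv hΩ hlb fun K hK hKc ↦
      (hΦb 0 K hK hKc).imp fun M hM w hw ↦ (abs_le.1 (hM w hw)).2)
    (ae_restrict_of_forall_mem hΩ.measurableSet hmono)
    (ae_restrict_of_forall_mem hΩ.measurableSet hlim) hz
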